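/- Let E ∈ 𝓔, let M ≠ {0} be a closed linear subspace of E, and let Ω(M) be the set of all λ ∈ 𝔻 such that M has the division property at λ. Then either Ω(M) = ∅ or Ω(M) = 𝔻 ∖ Z(M). -/

import Mathlib

noncomputable section

open Metric Set Filter Topology
open scoped Classical

/-- Functions holomorphic on the open unit disc, normalized to vanish outside it.
This is our model of `Hol(𝔻)`. -/
def HolDisc : Set (ℂ → ℂ) :=
  {f | DifferentiableOn ℂ f (Metric.ball (0:ℂ) 1) ∧ ∀ z ∉ Metric.ball (0:ℂ) 1, f z = 0}

/-- The constant function `1` of `Hol(𝔻)` (normalized to vanish outside the disc). -/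
def oneD : ℂ → ℂ := fun z => if z ∈ Metric.ball (0:ℂ) 1 then 1 else 0

/-- The shift `S`, `(Sf)(z) = z f(z)`, as a linear map. -/
def shiftL : (ℂ → ℂ) →ₗ[ℂ] (ℂ → ℂ) where
  toFun f := fun z => z * f z
  map_add' f g := by funext z; simp [mul_add]
  map_smul' c f := by funext z; simp [smul_eq_mul]; ring

/-- Division: `f_λ(z) = (f(z) - f(λ))/(z - λ)` for `z ≠ λ`, `f_λ(λ) = f'(λ)`,
normalized to vanish outside the disc.  `fdivB 0` is the backward shift `T`. -/
def fdivB (lam : ℂ) (f : ℂ → ℂ) : ℂ → ℂ := fun z =>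
  if z ∈ Metric.ball (0:ℂ) 1 then
    (if z = lam then deriv f lam else (f z - f lam) / (z - lam))
  else 0

/-- The reflected model of the shift `S⁻` on `H₀(ℂ ∖ 𝔻̄)`: a function `h` on `{|ζ|>1}`
vanishing at `∞` is represented by `k(w) = h(1/w)` (holomorphic on `𝔻`, `k 0 = 0`);
`S⁻` corresponds to `k ↦ (k(z) - k(0))/z - k'(0)·1`. -/
def negShiftF (k : ℂ → ℂ) : ℂ → ℂ := fun z => fdivB 0 k z - deriv k 0 * oneD z

/-- `n`-th Taylor coefficient at the origin. -/
def tCoeff (n : ℕ) (f : ℂ → ℂ) : ℂ := iteratedDeriv n f 0 / (Nat.factorial n)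

/-!
If `1 - w T` is invertible, then `R w = (1 - w T)⁻¹ T` realizes `f ↦ f_w` on `E`, and it depends
holomorphically on `w`. Suppose that `M` has the division property at `lam`, that `k ∈ M` satisfies
`k(lam) ≠ 0`, and for `f ∈ M` let `Φ_f(w)` be the class of `R w (k(w) f - f(w) k)` in `E ⧸ M`, a
holomorphic function of `w ∈ 𝔻`. Writing `f = c k + (z - lam) g` with `g ∈ M` gives
`Φ_f(w) = (w - lam) Φ_g(w)`. As `g` is again in `M`, this can be repeated: every `Φ_f` vanishes to
infinite order at `lam`, hence identically. When `f(w) = 0` and `k(w) ≠ 0`, the equation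
`Φ_f(w) = 0` says `f_w ∈ M`. The same infinite divisibility, applied to `M` itself, shows that `M`
cannot have the division property at a common zero unless `M = 0`.
-/

section InfiniteDivisibility

variable {𝕜 V α : Type*} [NontriviallyNormedField 𝕜] [NormedAddCommGroup V] [NormedSpace 𝕜 V]
  {F : α → 𝕜 → V} {z₀ : 𝕜}

lemma natCast_le_analyticOrderAt_of_forall_exists_eventuallyEq_sub_smul
    (hF : ∀ a, AnalyticAt 𝕜 (F a) z₀)
    (hdiv : ∀ a, ∃ b, F a =ᶠ[𝓝 z₀] fun z => (z - z₀) • F b z) (n : ℕ) (a : α) :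
    n ≤ analyticOrderAt (F a) z₀ := by
  rw [natCast_le_analyticOrderAt (hF a)]
  induction n generalizing a with
  | zero => exact ⟨F a, hF a, by simp⟩
  | succ n ih =>
    obtain ⟨b, hab⟩ := hdiv a
    obtain ⟨G, hG, hbG⟩ := ih b
    refine ⟨G, hG, ?_⟩
    filter_upwards [hab, hbG] with z hz hz'
    rw [hz, hz', pow_succ', mul_smul]

lemma eqOn_zero_of_forall_exists_eventuallyEq_sub_smul {U : Set 𝕜} (hU : IsPreconnected U)
    (hz₀ : z₀ ∈ U) (hF : ∀ a, AnalyticOnNhd 𝕜 (F a) U)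
    (hdiv : ∀ a, ∃ b, F a =ᶠ[𝓝 z₀] fun z => (z - z₀) • F b z) (a : α) :
    EqOn (F a) 0 U := by
  have horder : analyticOrderAt (F a) z₀ = ⊤ := ENat.eq_top_iff_forall_ge.2 fun n =>
    natCast_le_analyticOrderAt_of_forall_exists_eventuallyEq_sub_smul
      (fun b => hF b z₀ hz₀) hdiv n a
  exact (hF a).eqOn_zero_of_preconnected_of_eventuallyEq_zero hU hz₀
    (analyticOrderAt_eq_top.1 horder)

end InfiniteDivisibility

section BanachAlgebra

variable {𝕜 A : Type*} [NontriviallyNormedField 𝕜] [NormedRing A] [NormedAlgebra 𝕜 A] {a : A}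
  {z : 𝕜}

lemma isUnit_one_sub_smul_of_mem_ball (ha : spectralRadius 𝕜 a ≤ 1) (hz : z ∈ ball (0 : 𝕜) 1) :
    IsUnit (1 - z • a) := by
  have hnorm : (‖z‖₊ : ENNReal) < 1 := by
    rw [mem_ball_zero_iff] at hz
    exact_mod_cast hz
  exact spectrum.isUnit_one_sub_smul_of_lt_inv_radius
    (hnorm.trans_le (ENNReal.one_le_inv.2 ha))

lemma differentiableAt_inverse_one_sub_smul [CompleteSpace A] (hz : IsUnit (1 - z • a)) :
    DifferentiableAt 𝕜 (fun w : 𝕜 => Ring.inverse (1 - w • a)) z :=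
  (differentiableAt_inverse hz).comp z
    (f := fun w : 𝕜 => 1 - w • a) (by fun_prop)

end BanachAlgebra

section Quotients

variable {lam z : ℂ} {F G : ℂ → ℂ}

lemma sub_mul_fdivB (lam : ℂ) (F : ℂ → ℂ) (hz : z ∈ ball (0 : ℂ) 1) :
    (z - lam) * fdivB lam F z = F z - F lam := by
  unfold fdivB
  rw [if_pos hz]
  split_ifs with h
  · simp [h]
  · exact mul_div_cancel₀ _ (sub_ne_zero.2 h)

lemma eq_fdivB_of_sub_mul_eq (hlam : lam ∈ ball (0 : ℂ) 1) (hG : G ∈ HolDisc)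
    (h : ∀ z ∈ ball (0 : ℂ) 1, (z - lam) * G z = F z - F lam) : G = fdivB lam F := by
  funext z
  unfold fdivB
  split_ifs with hz hzlam
  · subst hzlam
    have hGz : HasDerivAt G (deriv G z) z :=
      (hG.1.differentiableAt (isOpen_ball.mem_nhds hlam)).hasDerivAt
    have hF : F =ᶠ[𝓝 z] fun w => (w - z) * G w + F z := by
      filter_upwards [isOpen_ball.mem_nhds hlam] with w hw
      rw [h w hw, sub_add_cancel]
    have hderiv : HasDerivAt (fun w => (w - z) * G w + F z) (1 * G z + (z - z) * deriv G z) z :=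
      (((hasDerivAt_id z).sub_const z).mul hGz).add_const _
    rw [hF.deriv_eq, hderiv.deriv, sub_self, zero_mul, one_mul, add_zero]
  · rw [eq_div_iff (sub_ne_zero.2 hzlam), ← h z hz, mul_comm]
  · exact hG.2 z hz

end Quotients

section DivisionProperty

variable {X : Type*} [AddCommGroup X] [Module ℂ X] {ι : X →ₗ[ℂ] (ℂ → ℂ)} {M : Submodule ℂ X}
  {lam : ℂ} {k f : X}

/-- The division property of `M` at `lam ∈ 𝔻`: the elements of `M` vanishing at `lam` can be
divided by `z - lam` within `M`. The elements of `X` are regarded as functions through `ι`. -/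
def HasDivisionPropertyAt (ι : X →ₗ[ℂ] (ℂ → ℂ)) (M : Submodule ℂ X) (lam : ℂ) : Prop :=
  ∀ f ∈ M, ι f lam = 0 → ∃ g ∈ M, ι g = fdivB lam (ι f)

namespace HasDivisionPropertyAt

lemma exists_eq_sub_mul (h : HasDivisionPropertyAt ι M lam) (hf : f ∈ M) (hf0 : ι f lam = 0) :
    ∃ g ∈ M, ∀ z ∈ ball (0 : ℂ) 1, ι f z = (z - lam) * ι g z := by
  obtain ⟨g, hg, hgf⟩ := h f hf hf0
  refine ⟨g, hg, fun z hz => ?_⟩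
  rw [hgf, sub_mul_fdivB lam _ hz, hf0, sub_zero]

lemma exists_eq_mul_add_sub_mul (h : HasDivisionPropertyAt ι M lam) (hk : k ∈ M)
    (hk0 : ι k lam ≠ 0) (hf : f ∈ M) :
    ∃ c : ℂ, ∃ g ∈ M, ∀ z ∈ ball (0 : ℂ) 1, ι f z = c * ι k z + (z - lam) * ι g z := by
  let c := ι f lam / ι k lam
  have hzero : ι (f - c • k) lam = 0 := by simp [c, hk0]
  obtain ⟨g, hg, hgf⟩ := h.exists_eq_sub_mul (M.sub_mem hf (M.smul_mem c hk)) hzero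
  refine ⟨c, g, hg, fun z hz => ?_⟩
  rw [← hgf z hz]
  simp

lemma exists_apply_ne_zero (h : HasDivisionPropertyAt ι M lam) (hinj : Function.Injective ι)
    (hhol : ∀ f, ι f ∈ HolDisc) (hlam : lam ∈ ball (0 : ℂ) 1) (hM : M ≠ ⊥) :
    ∃ f ∈ M, ι f lam ≠ 0 := by
  by_contra! hzero
  have hdiv : ∀ f : M, ∃ g : M, ι f =ᶠ[𝓝 lam] fun z => (z - lam) • ι g z := fun f => by
    obtain ⟨g, hg, hfg⟩ := h.exists_eq_sub_mul f.2 (hzero f f.2)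
    exact ⟨⟨g, hg⟩, eventually_of_mem (isOpen_ball.mem_nhds hlam) hfg⟩
  have hvanish := eqOn_zero_of_forall_exists_eventuallyEq_sub_smul
    (convex_ball (0 : ℂ) 1).isPreconnected hlam
    (fun f : M => (hhol f).1.analyticOnNhd isOpen_ball) hdiv
  refine hM ((Submodule.eq_bot_iff M).2 fun f hf => hinj ?_)
  funext z
  rw [map_zero]
  by_cases hz : z ∈ ball (0 : ℂ) 1
  · exact hvanish ⟨f, hf⟩ hz
  · exact (hhol f).2 z hz

end HasDivisionPropertyAt

end DivisionProperty

section DivisionOperator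

variable {X : Type*} [NormedAddCommGroup X] [NormedSpace ℂ X] {ι : X →ₗ[ℂ] (ℂ → ℂ)}
  {T : X →L[ℂ] X} {M : Submodule ℂ X} {lam w : ℂ} {k f g : X}

/-- The operator `(1 - w T)⁻¹ T`. If `T` is the backward shift, it is `f ↦ f_w`. It has the junk
value `0` when `1 - w T` is not invertible. -/
def divisionOperator (T : X →L[ℂ] X) (w : ℂ) : X →L[ℂ] X :=
  Ring.inverse (1 - w • T) * T

lemma divisionOperator_apply_eq_add (hw : IsUnit (1 - w • T)) (f : X) :
    divisionOperator T w f = T f + w • T (divisionOperator T w f) := by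
  have h : (1 - w • T) * divisionOperator T w = T := by
    rw [divisionOperator, Ring.mul_inverse_cancel_left _ _ hw]
  simpa [sub_eq_iff_eq_add] using congrArg (fun B : X →L[ℂ] X => B f) h

lemma differentiableOn_divisionOperator [CompleteSpace X] (hT : spectralRadius ℂ T ≤ 1) :
    DifferentiableOn ℂ (divisionOperator T) (ball 0 1) := fun _ hz =>
  ((differentiableAt_inverse_one_sub_smul
    (isUnit_one_sub_smul_of_mem_ball hT hz)).mul_const T).differentiableWithinAt

lemma map_divisionOperator (hhol : ∀ f, ι f ∈ HolDisc) (hιT : ∀ f, ι (T f) = fdivB 0 (ι f))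
    (hw : w ∈ ball (0 : ℂ) 1) (hunit : IsUnit (1 - w • T)) (f : X) :
    ι (divisionOperator T w f) = fdivB w (ι f) := by
  set g := divisionOperator T w f
  have hzT : ∀ h : X, ∀ z ∈ ball (0 : ℂ) 1, z * ι (T h) z = ι h z - ι h 0 := fun h z hz => by
    rw [hιT, ← sub_mul_fdivB 0 _ hz, sub_zero]
  have key : ∀ z ∈ ball (0 : ℂ) 1, z * ι g z = ι f z - ι f 0 + w * (ι g z - ι g 0) :=
    fun z hz => by
      have hgz : ι g z = ι (T f) z + w * ι (T g) z := by
        simpa using congrFun (congrArg ι (divisionOperator_apply_eq_add hunit f)) z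
      linear_combination z * hgz + hzT f z hz + w * hzT g z hz
  refine eq_fdivB_of_sub_mul_eq hw (hhol _) fun z hz => ?_
  linear_combination key z hz - key w hw

lemma divisionOperator_eq_of_sub_mul_eq (hinj : Function.Injective ι)
    (hhol : ∀ f, ι f ∈ HolDisc) (hιT : ∀ f, ι (T f) = fdivB 0 (ι f))
    (hw : w ∈ ball (0 : ℂ) 1) (hunit : IsUnit (1 - w • T))
    (h : ∀ z ∈ ball (0 : ℂ) 1, (z - w) * ι g z = ι f z - ι f w) :
    divisionOperator T w f = g := by
  apply hinj
  rw [map_divisionOperator hhol hιT hw hunit, ← eq_fdivB_of_sub_mul_eq hw (hhol g) h]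

/-- The function `Φ_f(w)`, the class of `R w (k(w) f - f(w) k)` modulo `M`, where `R w` is
`divisionOperator T w`. It measures the failure of the division property of `M` at `w`. -/
def divisionDefect (ι : X →ₗ[ℂ] (ℂ → ℂ)) (T : X →L[ℂ] X) (M : Submodule ℂ X) (k f : X) (w : ℂ) :
    X ⧸ M :=
  M.mkQL (divisionOperator T w (ι k w • f - ι f w • k))

lemma differentiableOn_divisionDefect [CompleteSpace X] [IsClosed (M : Set X)]
    (hhol : ∀ f, ι f ∈ HolDisc) (hT : spectralRadius ℂ T ≤ 1) (k f : X) :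
    DifferentiableOn ℂ (divisionDefect ι T M k f) (ball 0 1) :=
  M.mkQL.differentiable.comp_differentiableOn <|
    (differentiableOn_divisionOperator hT).clm_apply <|
      ((hhol k).1.smul_const f).sub ((hhol f).1.smul_const k)

lemma divisionDefect_eq_sub_smul (hinj : Function.Injective ι)
    (hhol : ∀ f, ι f ∈ HolDisc) (hιT : ∀ f, ι (T f) = fdivB 0 (ι f))
    (hw : w ∈ ball (0 : ℂ) 1) (hunit : IsUnit (1 - w • T)) (hg : g ∈ M) {c : ℂ}
    (hfg : ∀ z ∈ ball (0 : ℂ) 1, ι f z = c * ι k z + (z - lam) * ι g z) :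
    divisionDefect ι T M k f w = (w - lam) • divisionDefect ι T M k g w := by
  set r := divisionOperator T w (ι k w • g - ι g w • k) with hr
  have hrz : ∀ z ∈ ball (0 : ℂ) 1,
      (z - w) * ι r z = ι k w * ι g z - ι g w * ι k z := fun z hz => by
    rw [hr, map_divisionOperator hhol hιT hw hunit, sub_mul_fdivB w _ hz]
    simp [mul_comm]
  have hdecomp : divisionOperator T w (ι k w • f - ι f w • k) = ι k w • g + (w - lam) • r := by
    refine divisionOperator_eq_of_sub_mul_eq hinj hhol hιT hw hunit fun z hz => ?_
    simp only [map_add, map_sub, map_smul, Pi.add_apply, Pi.sub_apply, Pi.smul_apply, smul_eq_mul]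
    rw [hfg z hz, hfg w hw]
    linear_combination (w - lam) * hrz z hz
  have hg0 : M.mkQL g = 0 := (Submodule.Quotient.mk_eq_zero M).2 hg
  rw [divisionDefect, hdecomp, map_add, map_smul, map_smul, hg0, smul_zero, zero_add,
    divisionDefect]

namespace HasDivisionPropertyAt

variable [CompleteSpace X] [IsClosed (M : Set X)]

lemma divisionDefect_eqOn_zero (h : HasDivisionPropertyAt ι M lam)
    (hinj : Function.Injective ι) (hhol : ∀ f, ι f ∈ HolDisc)
    (hιT : ∀ f, ι (T f) = fdivB 0 (ι f)) (hT : spectralRadius ℂ T ≤ 1)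
    (hlam : lam ∈ ball (0 : ℂ) 1) (hk : k ∈ M) (hk0 : ι k lam ≠ 0) (hf : f ∈ M) :
    EqOn (divisionDefect ι T M k f) 0 (ball 0 1) := by
  have hdiv : ∀ f : M, ∃ g : M, divisionDefect ι T M k f =ᶠ[𝓝 lam]
      fun w => (w - lam) • divisionDefect ι T M k g w := fun f => by
    obtain ⟨c, g, hg, hfg⟩ := h.exists_eq_mul_add_sub_mul hk hk0 f.2
    refine ⟨⟨g, hg⟩, eventually_of_mem (isOpen_ball.mem_nhds hlam) fun w hw => ?_⟩
    exact divisionDefect_eq_sub_smul hinj hhol hιT hw (isUnit_one_sub_smul_of_mem_ball hT hw) hg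
      hfg
  exact eqOn_zero_of_forall_exists_eventuallyEq_sub_smul (convex_ball (0 : ℂ) 1).isPreconnected
    hlam (fun f : M => (differentiableOn_divisionDefect hhol hT k f).analyticOnNhd isOpen_ball)
    hdiv ⟨f, hf⟩

lemma of_apply_ne_zero (h : HasDivisionPropertyAt ι M lam)
    (hinj : Function.Injective ι) (hhol : ∀ f, ι f ∈ HolDisc)
    (hιT : ∀ f, ι (T f) = fdivB 0 (ι f)) (hT : spectralRadius ℂ T ≤ 1)
    (hlam : lam ∈ ball (0 : ℂ) 1) (hw : w ∈ ball (0 : ℂ) 1) (hk : k ∈ M)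
    (hklam : ι k lam ≠ 0) (hkw : ι k w ≠ 0) : HasDivisionPropertyAt ι M w := by
  intro f hf hfw
  have hzero : divisionDefect ι T M k f w = 0 :=
    h.divisionDefect_eqOn_zero hinj hhol hιT hT hlam hk hklam hf hw
  have hmem : divisionOperator T w (ι k w • f - ι f w • k) ∈ M :=
    (Submodule.Quotient.mk_eq_zero M).1 hzero
  rw [hfw, zero_smul, sub_zero, map_smul, M.smul_mem_iff hkw] at hmem
  exact ⟨_, hmem,
    map_divisionOperator hhol hιT hw (isUnit_one_sub_smul_of_mem_ball hT hw) f⟩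

end HasDivisionPropertyAt

end DivisionOperator

lemma exists_mem_apply_ne_zero_and_apply_ne_zero {K X α : Type*} [Field K] [Infinite K]
    [AddCommGroup X] [Module K X] {ι : X →ₗ[K] (α → K)} {M : Submodule K X} {a b : α}
    (ha : ∃ f ∈ M, ι f a ≠ 0) (hb : ∃ f ∈ M, ι f b ≠ 0) :
    ∃ f ∈ M, ι f a ≠ 0 ∧ ι f b ≠ 0 := by
  obtain ⟨f, hf, hne⟩ := Module.Dual.exists_forall_mem_ne_zero_of_forall_exists M
    (fun i : Bool => LinearMap.proj (cond i a b) ∘ₗ ι) (Bool.forall_bool.2 ⟨hb, ha⟩)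
  exact ⟨f, hf, hne true, hne false⟩

theorem statement8_general
    {X : Type*} [NormedAddCommGroup X] [NormedSpace ℂ X] [CompleteSpace X]
    (ι : X →ₗ[ℂ] (ℂ → ℂ)) (hinj : Function.Injective ι) (hhol : ∀ f, ι f ∈ HolDisc)
    (T : X →L[ℂ] X) (hιT : ∀ f, ι (T f) = fdivB 0 (ι f)) (hT : spectralRadius ℂ T ≤ 1)
    (M : Submodule ℂ X) (hMc : IsClosed (M : Set X)) (hM : M ≠ ⊥) :
    {lam | lam ∈ ball (0 : ℂ) 1 ∧ HasDivisionPropertyAt ι M lam} = ∅ ∨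
      {lam | lam ∈ ball (0 : ℂ) 1 ∧ HasDivisionPropertyAt ι M lam} =
        {lam | lam ∈ ball (0 : ℂ) 1 ∧ ∃ f ∈ M, ι f lam ≠ 0} := by
  rw [or_iff_not_imp_left, ← Ne, ← nonempty_iff_ne_empty]
  rintro ⟨lam, hlam, h⟩
  ext w
  refine and_congr_right fun hw =>
    ⟨fun hdiv => hdiv.exists_apply_ne_zero hinj hhol hw hM, fun hne => ?_⟩
  obtain ⟨k, hk, hklam, hkw⟩ := exists_mem_apply_ne_zero_and_apply_ne_zero
    (h.exists_apply_ne_zero hinj hhol hlam hM) hne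
  exact h.of_apply_ne_zero hinj hhol hιT hT hlam hw hk hklam hkw

/-- (Proposition 3.4) For a nonzero closed subspace `M` of `E ∈ 𝓔`,
the set `Ω(M)` of points of `𝔻` at which `M` has the division property is either empty
or equal to `𝔻 ∖ Z(M)`. -/
theorem statement8
    {X : Type*} [NormedAddCommGroup X] [NormedSpace ℂ X] [CompleteSpace X]
    (ι : X →ₗ[ℂ] (ℂ → ℂ)) (hinj : Function.Injective ι)
    (hhol : ∀ f : X, ι f ∈ HolDisc)
    (Sb Tb : X →L[ℂ] X)
    (hSb : ∀ f : X, ι (Sb f) = shiftL (ι f))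
    (hTb : ∀ f : X, ι (Tb f) = fdivB 0 (ι f))
    (hSrad : spectralRadius ℂ Sb ≤ 1) (hTrad : spectralRadius ℂ Tb ≤ 1)
    (M : Submodule ℂ X) (hMc : IsClosed (M : Set X)) (hM0 : M ≠ ⊥) :
    {lam : ℂ | lam ∈ Metric.ball (0:ℂ) 1 ∧
        ∀ f ∈ M, ι f lam = 0 → ∃ g ∈ M, ι g = fdivB lam (ι f)} = ∅
    ∨ {lam : ℂ | lam ∈ Metric.ball (0:ℂ) 1 ∧
        ∀ f ∈ M, ι f lam = 0 → ∃ g ∈ M, ι g = fdivB lam (ι f)}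
      = {lam : ℂ | lam ∈ Metric.ball (0:ℂ) 1 ∧ ∃ f ∈ M, ι f lam ≠ 0} := by
  exact statement8_general ι hinj hhol Tb hTb hTrad M hMc hM0
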